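/- The two-sided edge change of variables u(û) = −1 + (1/π)·w(π(û + 1)) is a strictly increasing bijection from [−1, 1] onto [−1, 1], and its derivatives of all orders k with 1 ≤ k ≤ p − 1 vanish at both endpoints û = −1 and û = 1. -/

import Mathlib

/-!
In the variable `x = û` the two values of `v` in the denominator of `w` are `a(x)` and
`a(-x) = 1 - a(x)`, where `a(x) = (1/2 - 1/p) x³ + x/p + 1/2` increases strictly from `a(-1) = 0`
to `a(1) = 1`. Hence `u = 2 ρ(a(x)) - 1` with `ρ(t) = tᵖ / (tᵖ + (1 - t)ᵖ)`. On `[0, 1]` the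
numerator of `ρ` increases while `(1 - t)ᵖ` decreases, so `u` is strictly increasing. The
denominator of `ρ` has no real zero, so `u` is analytic and `u + 1` vanishes to order at least `p`
where `a` vanishes, that is, at `-1`. Since `ρ(1 - t) = 1 - ρ(t)`, the function `u` is odd, which
carries everything over to the endpoint `1`.
-/

open Real

/-- The function `v` from equation (colt_kress_2), depending on an integer parameter `p`. -/
noncomputable def vCK (p : ℕ) (τ : ℝ) : ℝ :=
  (1 / (p : ℝ) - 1 / 2) * ((π - τ) / π) ^ 3 + (1 / (p : ℝ)) * ((τ - π) / π) + 1 / 2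

/-- The Colton–Kress change of variables `w` from equation (colt_kress_1). -/
noncomputable def wCK (p : ℕ) (τ : ℝ) : ℝ :=
  2 * π * (vCK p τ) ^ p / ((vCK p τ) ^ p + (vCK p (2 * π - τ)) ^ p)

/-- The two-sided edge change of variables `u(û) = −1 + (1/π)·w(π(û + 1))`. -/
noncomputable def edgeCV (p : ℕ) (uu : ℝ) : ℝ :=
  -1 + (1 / π) * wCK p (π * (uu + 1))

section IteratedDeriv

variable {𝕜 E : Type*} [NontriviallyNormedField 𝕜] [NormedAddCommGroup E] [NormedSpace 𝕜 E]

lemma iteratedDeriv_pow_smul_eq_zero [CharZero 𝕜] [CompleteSpace E] {f : 𝕜 → 𝕜} {g : 𝕜 → E}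
    {x : 𝕜} (hf : AnalyticAt 𝕜 f x) (hg : AnalyticAt 𝕜 g x) (hfx : f x = 0) {k n : ℕ}
    (hk : k < n) : iteratedDeriv k (f ^ n • g) x = 0 := by
  have one_le_order : 1 ≤ analyticOrderAt f x :=
    Order.one_le_iff_ne_zero.2 (hf.analyticOrderAt_ne_zero.2 hfx)
  have le_order : (n : ℕ∞) ≤ analyticOrderAt (f ^ n • g) x := by
    rw [analyticOrderAt_smul (hf.pow n) hg, analyticOrderAt_pow hf, nsmul_eq_mul]
    exact le_add_right (le_mul_of_one_le_right' one_le_order)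
  exact (natCast_le_analyticOrderAt_iff_iteratedDeriv_eq_zero ((hf.pow n).smul hg)).1 le_order k hk

lemma iteratedDeriv_apply_neg_of_odd {f : 𝕜 → E} (hf : Function.Odd f) (k : ℕ) (x : 𝕜) :
    iteratedDeriv k f (-x) = (-1 : 𝕜) ^ (k + 1) • iteratedDeriv k f x := by
  have hcomp : (fun y ↦ f (-y)) = -f := funext hf
  have h := iteratedDeriv_comp_neg k f (-x)
  rw [hcomp, iteratedDeriv_neg, neg_neg] at h
  rw [pow_succ', mul_smul, ← h, neg_one_smul, neg_neg]

end IteratedDeriv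

lemma bijOn_Icc_of_strictMonoOn {α β : Type*} [ConditionallyCompleteLinearOrder α]
    [TopologicalSpace α] [OrderTopology α] [DenselyOrdered α] [LinearOrder β] [TopologicalSpace β]
    [OrderClosedTopology β] {f : α → β} {a b : α} (hab : a ≤ b)
    (hcont : ContinuousOn f (Set.Icc a b)) (hmono : StrictMonoOn f (Set.Icc a b)) :
    Set.BijOn f (Set.Icc a b) (Set.Icc (f a) (f b)) :=
  ⟨hmono.monotoneOn.mapsTo_Icc, hmono.injOn, intermediate_value_Icc hab hcont⟩

lemma pow_add_pow_pos_of_add_pos {R : Type*} [CommRing R] [LinearOrder R] [IsStrictOrderedRing R]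
    {a b : R} (h : 0 < a + b) (n : ℕ) : 0 < a ^ n + b ^ n := by
  rcases n.even_or_odd with heven | hodd
  · rcases lt_or_lt_of_add_lt_add ((add_zero (0 : R)).trans_lt h) with ha | hb
    · exact add_pos_of_pos_of_nonneg (pow_pos ha n) (heven.pow_nonneg b)
    · exact add_pos_of_nonneg_of_pos (heven.pow_nonneg a) (pow_pos hb n)
  · have hlt : (-b) ^ n < a ^ n := hodd.strictMono_pow (neg_lt_iff_pos_add.2 h)
    rwa [hodd.neg_pow, neg_lt_iff_pos_add] at hlt

section PowRatio

/-- The rational function `tⁿ / (tⁿ + (1 - t)ⁿ)`, which gives the change of variables `w / (2π)`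
as a function of `t = v`. -/
def powRatio {K : Type*} [Field K] (n : ℕ) (t : K) : K :=
  t ^ n / (t ^ n + (1 - t) ^ n)

lemma powRatio_zero {K : Type*} [Field K] {n : ℕ} (hn : n ≠ 0) : powRatio n (0 : K) = 0 := by
  simp [powRatio, hn]

variable {K : Type*} [Field K] [LinearOrder K] [IsStrictOrderedRing K]

lemma pow_add_one_sub_pow_pos (n : ℕ) (t : K) : 0 < t ^ n + (1 - t) ^ n :=
  pow_add_pow_pos_of_add_pos (by simp) n

lemma powRatio_one_sub (n : ℕ) (t : K) : powRatio n (1 - t) = 1 - powRatio n t := by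
  have hden := (pow_add_one_sub_pow_pos n t).ne'
  rw [powRatio, powRatio, sub_sub_cancel, add_comm, eq_sub_iff_add_eq', ← add_div, div_self hden]

lemma strictMonoOn_powRatio {n : ℕ} (hn : n ≠ 0) :
    StrictMonoOn (powRatio n : K → K) (Set.Icc 0 1) := by
  rintro s ⟨hs, -⟩ t ⟨-, ht⟩ hst
  have hpow : s ^ n < t ^ n := pow_lt_pow_left₀ hst hs hn
  have hpow' : (1 - t) ^ n < (1 - s) ^ n :=
    pow_lt_pow_left₀ (sub_lt_sub_left hst 1) (sub_nonneg.2 ht) hn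
  have hcross : s ^ n * (1 - t) ^ n < t ^ n * (1 - s) ^ n :=
    mul_lt_mul'' hpow hpow' (pow_nonneg hs n) (pow_nonneg (sub_nonneg.2 ht) n)
  rw [powRatio, powRatio, div_lt_div_iff₀ (pow_add_one_sub_pow_pos n s)
    (pow_add_one_sub_pow_pos n t)]
  linarith

lemma analyticAt_powRatio (n : ℕ) (t : ℝ) : AnalyticAt ℝ (powRatio n) t := by
  unfold powRatio
  fun_prop (disch := exact (pow_add_one_sub_pow_pos n t).ne')

lemma iteratedDeriv_powRatio_comp_eq_zero {f : ℝ → ℝ} {x : ℝ} (hf : AnalyticAt ℝ f x)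
    (hfx : f x = 0) {k n : ℕ} (hk : k < n) : iteratedDeriv k (powRatio n ∘ f) x = 0 := by
  have hg : AnalyticAt ℝ (fun y ↦ (f y ^ n + (1 - f y) ^ n)⁻¹) x := by
    fun_prop (disch := exact (pow_add_one_sub_pow_pos n (f x)).ne')
  have hfactor : powRatio n ∘ f = f ^ n • fun y ↦ (f y ^ n + (1 - f y) ^ n)⁻¹ :=
    funext fun _ ↦ div_eq_mul_inv _ _
  rw [hfactor]
  exact iteratedDeriv_pow_smul_eq_zero hf hg hfx hk

end PowRatio

section BlendCubic

variable {K : Type*} [Field K]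

/-- The cubic with point symmetry about `(0, 1/2)`, slope `c` there and value `1` at `1`. For
`c = 1 / p` it is the function `v` of Colton and Kress in the variable `x = τ / π - 1`. -/
def blendCubic (c x : K) : K :=
  (1 / 2 - c) * x ^ 3 + c * x + 1 / 2

lemma strictMono_blendCubic [LinearOrder K] [IsStrictOrderedRing K] {c : K} (hc : 0 < c)
    (hc' : c ≤ 1 / 2) : StrictMono (blendCubic c) :=
  have hcube : Monotone fun x : K ↦ x ^ 3 := (Odd.strictMono_pow (by decide)).monotone
  ((hcube.const_mul (sub_nonneg.2 hc')).add_strictMono (strictMono_id.const_mul hc)).add_const _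

variable [CharZero K]

lemma blendCubic_neg (c x : K) : blendCubic c (-x) = 1 - blendCubic c x := by
  unfold blendCubic
  ring

lemma blendCubic_one (c : K) : blendCubic c 1 = 1 := by
  unfold blendCubic
  ring

lemma blendCubic_neg_one (c : K) : blendCubic c (-1) = 0 := by
  rw [blendCubic_neg, blendCubic_one, sub_self]

end BlendCubic

lemma analyticAt_blendCubic (c x : ℝ) : AnalyticAt ℝ (blendCubic c) x := by
  unfold blendCubic
  fun_prop

lemma vCK_pi_mul_add_one (p : ℕ) (x : ℝ) : vCK p (π * (x + 1)) = blendCubic (1 / p : ℝ) x := by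
  unfold vCK blendCubic
  field_simp
  ring

lemma edgeCV_eq_powRatio (p : ℕ) (x : ℝ) :
    edgeCV p x = -1 + 2 * powRatio p (blendCubic (1 / p : ℝ) x) := by
  have hreflect : 2 * π - π * (x + 1) = π * (-x + 1) := by ring
  rw [edgeCV, wCK, hreflect, vCK_pi_mul_add_one, vCK_pi_mul_add_one, blendCubic_neg, powRatio]
  field_simp

lemma odd_edgeCV (p : ℕ) : Function.Odd (edgeCV p) := by
  intro x
  rw [edgeCV_eq_powRatio, edgeCV_eq_powRatio, blendCubic_neg, powRatio_one_sub]
  ring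

lemma edgeCV_neg_one {p : ℕ} (hp : p ≠ 0) : edgeCV p (-1) = -1 := by
  rw [edgeCV_eq_powRatio, blendCubic_neg_one, powRatio_zero hp, mul_zero, add_zero]

lemma edgeCV_one {p : ℕ} (hp : p ≠ 0) : edgeCV p 1 = 1 := by
  rw [← neg_inj, ← odd_edgeCV, edgeCV_neg_one hp]

lemma continuous_edgeCV (p : ℕ) : Continuous (edgeCV p) := by
  have hratio : Continuous (powRatio p : ℝ → ℝ) :=
    continuous_iff_continuousAt.2 fun t ↦ (analyticAt_powRatio p t).continuousAt
  have hcubic : Continuous (blendCubic (1 / p : ℝ)) :=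
    continuous_iff_continuousAt.2 fun x ↦ (analyticAt_blendCubic _ x).continuousAt
  rw [funext (edgeCV_eq_powRatio p)]
  fun_prop

lemma strictMonoOn_edgeCV {p : ℕ} (hp : 2 ≤ p) : StrictMonoOn (edgeCV p) (Set.Icc (-1) 1) := by
  have hcubic : StrictMono (blendCubic (1 / p : ℝ)) :=
    strictMono_blendCubic (by positivity)
      (one_div_le_one_div_of_le two_pos (Nat.ofNat_le_cast.2 hp))
  have hmaps : Set.MapsTo (blendCubic (1 / p : ℝ)) (Set.Icc (-1) 1) (Set.Icc 0 1) := by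
    simpa only [blendCubic_neg_one, blendCubic_one] using
      hcubic.monotone.mapsTo_Icc (a := -1) (b := 1)
  have hcomp := (strictMonoOn_powRatio (by lia : p ≠ 0)).comp (hcubic.strictMonoOn _) hmaps
  rw [funext (edgeCV_eq_powRatio p)]
  intro x hx y hy hxy
  simpa using hcomp hx hy hxy

lemma iteratedDeriv_edgeCV_neg_one {p k : ℕ} (hk : 0 < k) (hkp : k < p) :
    iteratedDeriv k (edgeCV p) (-1) = 0 := by
  have hratio := iteratedDeriv_powRatio_comp_eq_zero (analyticAt_blendCubic (1 / p : ℝ) (-1))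
    (blendCubic_neg_one _) hkp
  rw [funext (edgeCV_eq_powRatio p), iteratedDeriv_const_add hk, iteratedDeriv_const_mul_field]
  exact mul_eq_zero_of_right 2 hratio

theorem edgeCV_strictMono_bijective_and_flat_at_endpoints (p : ℕ) (hp : 2 ≤ p) :
    StrictMonoOn (edgeCV p) (Set.Icc (-1) 1) ∧
    Set.BijOn (edgeCV p) (Set.Icc (-1) 1) (Set.Icc (-1) 1) ∧
    (∀ k : ℕ, 1 ≤ k → k ≤ p - 1 →
      iteratedDeriv k (edgeCV p) (-1) = 0 ∧ iteratedDeriv k (edgeCV p) 1 = 0) := by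
  have hp₀ : p ≠ 0 := by lia
  have hmono := strictMonoOn_edgeCV hp
  have hbij : Set.BijOn (edgeCV p) (Set.Icc (-1) 1) (Set.Icc (-1) 1) := by
    simpa only [edgeCV_neg_one hp₀, edgeCV_one hp₀] using
      bijOn_Icc_of_strictMonoOn (by norm_num) (continuous_edgeCV p).continuousOn hmono
  refine ⟨hmono, hbij, fun k hk hkp ↦ ?_⟩
  have hflat : iteratedDeriv k (edgeCV p) (-1) = 0 := iteratedDeriv_edgeCV_neg_one hk (by lia)
  refine ⟨hflat, ?_⟩
  rw [← neg_neg (1 : ℝ), iteratedDeriv_apply_neg_of_odd (odd_edgeCV p), hflat, smul_zero]
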